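/- arXiv:1802.01728 — 3 statements merged into one kernel-verified Lean document; each statement's English description precedes it below -/
import Mathlib

section
/- Let f be a measurable function on I=(0,∞) whose decreasing rearrangement f* with respect to Lebesgue measure satisfies lim_{t→∞} f*(t) = α for some α > 0. Then for every ε > 0 there exists a measurable, surjective, Lebesgue-measure-preserving transformation τ : (0,∞) → (0,∞) such that |f(t)| ≤ (1+ε)·f*(τ(t)) for almost every t ∈ (0,∞). -/
open MeasureTheory Set Filter
open scoped ENNReal

/-- The interval `(0, a)` for `a : ℝ≥0∞` (equals `(0,∞)` when `a = ∞`). -/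
def Iset (a : ℝ≥0∞) : Set ℝ := {x : ℝ | 0 < x ∧ ENNReal.ofReal x < a}

/-- Lebesgue measure restricted to the interval `(0,a)`. -/
noncomputable def volI (a : ℝ≥0∞) : Measure ℝ := volume.restrict (Iset a)

/-- Decreasing rearrangement of an `ℝ≥0∞`-valued function with respect to a measure `μ`:
`f^{*,μ}(t) = inf {s > 0 : μ({f > s}) ≤ t}`. -/
noncomputable def rearrE (μ : Measure ℝ) (f : ℝ → ℝ≥0∞) (t : ℝ) : ℝ≥0∞ :=
  sInf {s : ℝ≥0∞ | 0 < s ∧ μ {x | s < f x} ≤ ENNReal.ofReal t}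

/-- Decreasing rearrangement of a real function with respect to a measure `μ` on `ℝ`:
`f^{*,μ}(t) = inf {s > 0 : μ({|f| > s}) ≤ t}`. -/
noncomputable def rearr (μ : Measure ℝ) (f : ℝ → ℝ) (t : ℝ) : ℝ≥0∞ :=
  rearrE μ (fun x => ENNReal.ofReal |f x|) t

/-- The measure `w·dm` on the set `I`. -/
noncomputable def wMeas (I : Set ℝ) (w : ℝ → ℝ) : Measure ℝ :=
  (volume.restrict I).withDensity (fun t => ENNReal.ofReal (w t))

/-- `W(t) = ∫₀ᵗ w dm`. -/
noncomputable def Wfun (w : ℝ → ℝ) (t : ℝ) : ℝ := ∫ s in Set.Ioo (0:ℝ) t, w s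

/-- `b = ∫_I w dm` as an extended real number. -/
noncomputable def bval (a : ℝ≥0∞) (w : ℝ → ℝ) : ℝ≥0∞ := ∫⁻ x in Iset a, ENNReal.ofReal (w x)

/-!
Cut the values of `|f|` into geometric levels: let `h = α (1+ε) ^ k` with `k = 0` where `|f| ≤ α`,
so that `|f| ≤ (1+ε) h` and `h ≤ max |f| α`. As `f* ≥ α`, the second bound gives `h* ≤ f*`, and it
suffices to find `τ` with `h ≤ h* ∘ τ` almost everywhere.

Since `f* → α`, the set `{k ≠ 0}` has finite measure. Order the points by decreasing `k`, and from
left to right where `k` is constant. Then every point has a finite measure `τ(t)` of points before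
it, and, the order having no ties, `τ` is measure preserving (this is the probability integral
transform for an infinite measure) and `h` is the decreasing function `h*` of `τ`. Finally `τ` is
made surjective by redefining it on an uncountable null set.
-/

lemma Iset_top : Iset ∞ = Ioi 0 := by
  ext x
  simp [Iset]

lemma volI_top : volI ∞ = volume.restrict (Ioi 0) := by
  rw [volI, Iset_top]

lemma volume_Iset (a : ℝ≥0∞) : volume (Iset a) = a := by
  induction a with
  | top => rw [Iset_top, Real.volume_Ioi]
  | coe a =>
    have hIset : Iset a = Ioo 0 (a : ℝ) := by
      ext x
      rw [Iset, mem_ofPred_eq, mem_Ioo, ← ENNReal.ofReal_coe_nnreal]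
      exact and_congr_right fun hx ↦ ENNReal.ofReal_lt_ofReal_iff_of_nonneg hx.le
    rw [hIset, Real.volume_Ioo, sub_zero, ENNReal.ofReal_coe_nnreal]

lemma volI_Iio (a : ℝ≥0∞) (b : ℝ) : volI a (Iio b) = min (ENNReal.ofReal b) a := by
  have hinter : Iio b ∩ Iset a = Iset (min (ENNReal.ofReal b) a) := by
    ext x
    simp only [Iset, mem_inter_iff, mem_Iio, mem_ofPred_eq, lt_min_iff]
    rw [and_left_comm]
    exact and_congr_right fun hx ↦
      and_congr_left fun _ ↦ (ENNReal.ofReal_lt_ofReal_iff_of_nonneg hx.le).symm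
  rw [volI, Measure.restrict_apply measurableSet_Iio, hinter, volume_Iset]

section DistributionFunction

lemma tendsto_measure_Iio_atTop (ν : Measure ℝ) :
    Tendsto (fun y ↦ ν (Iio y)) atTop (nhds (ν univ)) := by
  rw [← iUnion_Iio]
  exact tendsto_measure_iUnion_atTop monotone_Iio

lemma tendsto_measure_Iio_atBot {ν : Measure ℝ} (hν : ∃ y, ν (Iio y) ≠ ∞) :
    Tendsto (fun y ↦ ν (Iio y)) atBot (nhds 0) := by
  have hinter := tendsto_measure_iInter_atBot (μ := ν)
    (fun y ↦ (measurableSet_Iio (a := y)).nullMeasurableSet) monotone_Iio hν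
  have hempty : ⋂ y : ℝ, Iio y = ∅ := iInter_Iio_of_not_bddBelow_range (f := id) (by simp)
  rwa [hempty, measure_empty] at hinter

variable {ν : Measure ℝ} [NullSingletonClass ν]

lemma continuous_measure_Iio (hν : ∀ y, ν (Iio y) ≠ ∞) : Continuous fun y ↦ ν (Iio y) := by
  refine continuous_iff_continuousAt.2 fun y₀ ↦ ?_
  refine tendsto_measure_of_ae_tendsto_indicator (B := Iio (y₀ + 1)) (nhds y₀) measurableSet_Iio
    (fun _ ↦ measurableSet_Iio) measurableSet_Iio (hν _) ?_ ?_
  · filter_upwards [eventually_lt_nhds (lt_add_one y₀)] with y hy using Iio_subset_Iio hy.le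
  · filter_upwards [ν.ae_ne y₀] with x hx
    rcases hx.lt_or_gt with hlt | hgt
    · filter_upwards [eventually_gt_nhds hlt] with y hy using iff_of_true hy hlt
    · filter_upwards [eventually_lt_nhds hgt] with y hy using iff_of_false hy.not_gt hgt.not_gt

lemma exists_measure_Iio_eq (hν : ∀ y, ν (Iio y) ≠ ∞) {b : ℝ≥0∞} (hb₀ : 0 < b)
    (hb : b < ν univ) : ∃ y, ν (Iio y) = b :=
  mem_range_of_exists_le_of_exists_ge (continuous_measure_Iio hν)
    ((tendsto_measure_Iio_atBot ⟨0, hν 0⟩).eventually_le_const hb₀).exists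
    ((tendsto_measure_Iio_atTop ν).eventually_const_le hb).exists

lemma measure_setOf_measure_Iio_lt (hν : ∀ y, ν (Iio y) ≠ ∞) (b : ℝ≥0∞) :
    ν {y | ν (Iio y) < b} = min b (ν univ) := by
  have hmono {x y : ℝ} (hxy : x ≤ y) : ν (Iio x) ≤ ν (Iio y) := measure_mono (Iio_subset_Iio hxy)
  apply le_antisymm
  · refine le_min ?_ (measure_mono (subset_univ _))
    rcases eq_zero_or_pos b with rfl | hb₀
    · simp
    rcases lt_or_ge b (ν univ) with hb | hb
    · obtain ⟨y, rfl⟩ := exists_measure_Iio_eq hν hb₀ hb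
      exact measure_mono fun x hx ↦ lt_of_not_ge fun hyx ↦ (hmono hyx).not_gt hx
    · exact (measure_mono (subset_univ _)).trans hb
  · refine le_of_forall_lt_imp_le_of_dense fun c hc ↦ ?_
    obtain ⟨hcb, hc⟩ := lt_min_iff.1 hc
    rcases eq_zero_or_pos c with rfl | hc₀
    · exact zero_le
    obtain ⟨y, rfl⟩ := exists_measure_Iio_eq hν hc₀ hc
    exact measure_mono fun x hx ↦ (hmono (le_of_lt hx)).trans_lt hcb

theorem measurePreserving_toReal_measure_Iio (hν : ∀ y, ν (Iio y) ≠ ∞) :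
    MeasurePreserving (fun y ↦ (ν (Iio y)).toReal) ν (volI (ν univ)) := by
  have hmeas : Measurable fun y ↦ (ν (Iio y)).toReal :=
    (continuous_measure_Iio hν).measurable.ennreal_toReal
  have hIio (a : ℝ) : ν.map (fun y ↦ (ν (Iio y)).toReal) (Iio a) = volI (ν univ) (Iio a) := by
    have hpre : (fun y ↦ (ν (Iio y)).toReal) ⁻¹' Iio a = {y | ν (Iio y) < ENNReal.ofReal a} :=
      Set.ext fun y ↦ (ENNReal.lt_ofReal_iff_toReal_lt (hν y)).symm
    rw [Measure.map_apply hmeas measurableSet_Iio, hpre, measure_setOf_measure_Iio_lt hν, volI_Iio]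
  refine ⟨hmeas, Measure.ext_of_generateFrom_of_iUnion (range Iio) (fun n : ℕ ↦ Iio (n : ℝ))
    (BorelSpace.measurable_eq.trans (borel_eq_generateFrom_Iio ℝ)) isPiSystem_Iio ?_
    (fun n ↦ mem_range_self _) (fun n ↦ ?_) (forall_mem_range.2 hIio)⟩
  · exact iUnion_eq_univ_iff.2 exists_nat_gt
  · rw [hIio, volI_Iio]
    exact ((min_le_left _ _).trans_lt ENNReal.ofReal_lt_top).ne

end DistributionFunction

/-- The rank of `x` when points are ordered by increasing value of the key `g`: the `μ`-measure of
the set of points that strictly precede `x`. It is `0` by convention if this measure is infinite. -/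
noncomputable def measureRank {X : Type*} [MeasurableSpace X] (μ : Measure X) (g : X → ℝ) (x : X) :
    ℝ :=
  (μ {y | g y < g x}).toReal

theorem measurePreserving_measureRank {X : Type*} [MeasurableSpace X] {μ : Measure X} {g : X → ℝ}
    (hg : Measurable g) (hnull : ∀ c, μ (g ⁻¹' {c}) = 0) (hfin : ∀ c, μ {x | g x < c} ≠ ∞) :
    MeasurePreserving (measureRank μ g) μ (volI (μ univ)) := by
  have hIio (c : ℝ) : μ.map g (Iio c) = μ {x | g x < c} := Measure.map_apply hg measurableSet_Iio
  have : NullSingletonClass (μ.map g) :=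
    ⟨fun c ↦ (Measure.map_apply hg (measurableSet_singleton c)).trans (hnull c)⟩
  have hF := measurePreserving_toReal_measure_Iio (ν := μ.map g) fun c ↦ hIio c ▸ hfin c
  simp only [hIio, Measure.map_apply hg MeasurableSet.univ, preimage_univ] at hF
  exact hF.comp (hg.measurePreserving μ)

lemma antitone_rearrE (μ : Measure ℝ) (h : ℝ → ℝ≥0∞) : Antitone (rearrE μ h) :=
  fun _ _ hst ↦ sInf_le_sInf fun _ hx ↦ ⟨hx.1, hx.2.trans (ENNReal.ofReal_le_ofReal hst)⟩

lemma measure_setOf_le_le_of_rearrE_lt {μ : Measure ℝ} {h : ℝ → ℝ≥0∞} {t : ℝ} {c : ℝ≥0∞}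
    (hc : rearrE μ h t < c) : μ {x | c ≤ h x} ≤ ENNReal.ofReal t := by
  obtain ⟨s, ⟨-, hs⟩, hsc⟩ := sInf_lt_iff.1 hc
  exact (measure_mono fun x hx ↦ hsc.trans_le hx).trans hs

lemma measure_setOf_le_ne_top_of_tendsto_rearrE {μ : Measure ℝ} {h : ℝ → ℝ≥0∞} {a b : ℝ≥0∞}
    (hlim : Tendsto (rearrE μ h) atTop (nhds a)) (hab : a < b) : μ {x | b ≤ h x} ≠ ∞ := by
  obtain ⟨t, ht⟩ := (hlim.eventually_lt_const hab).exists
  exact ne_top_of_le_ne_top ENNReal.ofReal_ne_top (measure_setOf_le_le_of_rearrE_lt ht)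

lemma rearrE_le_rearrE_of_le_max {μ : Measure ℝ} {h u : ℝ → ℝ≥0∞} {c : ℝ≥0∞} {t : ℝ}
    (hhu : ∀ x, h x ≤ max (u x) c) (hc : c ≤ rearrE μ u t) : rearrE μ h t ≤ rearrE μ u t := by
  refine le_sInf fun s hs ↦ sInf_le ⟨hs.1, (measure_mono fun x hx ↦ ?_).trans hs.2⟩
  have hcs : c ≤ s := hc.trans (sInf_le hs)
  exact (lt_max_iff.1 (lt_of_lt_of_le hx (hhu x))).resolve_right hcs.not_gt

lemma le_rearrE_of_forall_btwn {μ : Measure ℝ} {h : ℝ → ℝ≥0∞} {D : Set ℝ≥0∞} (hD : Dense D)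
    {t : ℝ} {c : ℝ≥0∞} (hc : ∀ s ∈ D, s < c → ENNReal.ofReal t < μ {x | s < h x}) :
    c ≤ rearrE μ h t := by
  refine le_sInf fun s hs ↦ le_of_not_gt fun hsc ↦ ?_
  obtain ⟨r, hrD, hsr, hrc⟩ := hD.exists_between hsc
  exact ((hc r hrD hrc).trans_le (measure_mono fun x hx ↦ hsr.trans hx)).not_ge hs.2

/- If `s < h x`, the points preceding `x` all lie in `{s < h}`, so `rank x ≤ μ {s < h}`; equality
happens only on a null set, and it is enough to let `s` range over a countable dense set. -/
theorem ae_le_rearrE_measureRank {μ : Measure ℝ} {g : ℝ → ℝ} {h : ℝ → ℝ≥0∞}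
    (hg : Measurable g) (hnull : ∀ c, μ (g ⁻¹' {c}) = 0) (hfin : ∀ c, μ {x | g x < c} ≠ ∞)
    (hanti : ∀ x y, g x < g y → h y ≤ h x) :
    ∀ᵐ x ∂μ, h x ≤ rearrE μ h (measureRank μ g x) := by
  obtain ⟨D, hDcount, hD⟩ := TopologicalSpace.exists_countable_dense ℝ≥0∞
  have hne : ∀ᵐ x ∂μ, ∀ s ∈ D, measureRank μ g x ≠ (μ {y | s < h y}).toReal :=
    (ae_ball_iff hDcount).2 fun s _ ↦
      (measurePreserving_measureRank hg hnull hfin).quasiMeasurePreserving.ae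
        (ae_restrict_of_ae (volume.ae_ne _))
  filter_upwards [hne] with x hx
  refine le_rearrE_of_forall_btwn hD fun s hsD hs ↦ ?_
  rw [measureRank, ENNReal.ofReal_toReal (hfin _)]
  exact lt_of_le_of_ne (measure_mono fun y hy ↦ hs.trans_le (hanti y x hy))
    fun heq ↦ hx s hsD (congrArg ENNReal.toReal heq)

/-- A real-valued sort key for pairs `(n, t)`: sorting by it puts larger `n` first and, for equal
`n`, smaller `t` first. The level `n = 0` is sent onto `(0, ∞)` and the level `n ≥ 1` onto
`(-n, 1 - n)`, so that bounding the key bounds `t` from above on the level `0`. -/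
noncomputable def levelKey (n : ℕ) (t : ℝ) : ℝ :=
  if n = 0 then Real.exp t else Real.sigmoid t - n

lemma levelKey_strictMono (n : ℕ) : StrictMono (levelKey n) := by
  intro s t hst
  unfold levelKey
  split_ifs
  · exact Real.exp_lt_exp.2 hst
  · exact sub_lt_sub_right (Real.sigmoid_lt hst) _

lemma levelKey_lt_levelKey {m n : ℕ} (hmn : m < n) (s t : ℝ) : levelKey n s < levelKey m t := by
  have hcast : (m : ℝ) + 1 ≤ n := mod_cast hmn
  rw [levelKey, if_neg (Nat.ne_zero_of_lt hmn), levelKey]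
  split_ifs with hm
  · have := Real.sigmoid_lt_one s
    have := Real.exp_pos t
    have := m.cast_nonneg (α := ℝ)
    linarith
  · have := Real.sigmoid_lt_one s
    have := Real.sigmoid_pos t
    linarith

lemma measurable_levelKey {k : ℝ → ℕ} (hk : Measurable k) :
    Measurable fun t ↦ levelKey (k t) t :=
  Measurable.ite (hk (measurableSet_singleton 0)) Real.measurable_exp
    (Real.sigmoid_monotone.measurable.sub (measurable_from_top.comp hk))

lemma injective_levelKey (k : ℝ → ℕ) : Function.Injective fun t ↦ levelKey (k t) t := by
  intro s t (hst : levelKey (k s) s = levelKey (k t) t)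
  rcases lt_trichotomy (k s) (k t) with hlt | heq | hgt
  · exact absurd hst (levelKey_lt_levelKey hlt t s).ne'
  · exact (levelKey_strictMono (k t)).injective (heq ▸ hst)
  · exact absurd hst (levelKey_lt_levelKey hgt s t).ne

lemma setOf_levelKey_lt_subset (k : ℝ → ℕ) (c : ℝ) :
    {t | levelKey (k t) t < c} ⊆ {t | k t ≠ 0} ∪ Iio (Real.log c) := by
  intro t ht
  refine or_iff_not_imp_left.2 fun hk ↦ ?_
  have hexp : Real.exp t < c := by simpa [levelKey, not_not.1 hk] using ht
  exact (Real.lt_log_iff_exp_lt ((Real.exp_pos t).trans hexp)).2 hexp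

theorem exists_measurePreserving_le_rearrE_comp {μ : Measure ℝ} [NullSingletonClass μ]
    (hμ : ∀ a, μ (Iio a) ≠ ∞) {k : ℝ → ℕ} (hk : Measurable k) (hkμ : μ {x | k x ≠ 0} ≠ ∞) :
    ∃ τ : ℝ → ℝ, MeasurePreserving τ μ (volI (μ univ)) ∧
      ∀ c : ℕ → ℝ≥0∞, Monotone c → ∀ᵐ x ∂μ, c (k x) ≤ rearrE μ (c ∘ k) (τ x) := by
  have hg := measurable_levelKey hk
  have hnull (c : ℝ) : μ ((fun t ↦ levelKey (k t) t) ⁻¹' {c}) = 0 :=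
    (subsingleton_singleton.preimage (injective_levelKey k)).measure_zero μ
  have hfin (c : ℝ) : μ {t | levelKey (k t) t < c} ≠ ∞ :=
    measure_ne_top_of_subset (setOf_levelKey_lt_subset k c) (measure_union_ne_top hkμ (hμ _))
  refine ⟨_, measurePreserving_measureRank hg hnull hfin, fun c hc ↦
    ae_le_rearrE_measureRank hg hnull hfin fun x y hxy ↦ hc (le_of_not_gt fun hlt ↦ ?_)⟩
  exact (levelKey_lt_levelKey hlt y x).not_gt hxy

lemma exists_measurable_geometric_level {α q : ℝ} (hα : 0 < α) (hq : 1 < q) :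
    ∃ k : ℝ → ℕ, Measurable k ∧ ∀ r, α * q ^ k r ≤ max r α ∧ r ≤ q * (α * q ^ k r) := by
  have hlogb : Measurable fun r ↦ Real.logb q (max r α / α) :=
    (Real.measurable_log.comp (by fun_prop)).div_const _
  refine ⟨fun r ↦ ⌊Real.logb q (max r α / α)⌋₊, hlogb.nat_floor, fun r ↦ ?_⟩
  have hx : 1 ≤ max r α / α := (one_le_div hα).2 (le_max_right r α)
  set n := ⌊Real.logb q (max r α / α)⌋₊
  have hlower : q ^ n ≤ max r α / α := by
    rw [← Real.rpow_natCast, ← Real.le_logb_iff_rpow_le hq (zero_lt_one.trans_le hx)]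
    exact Nat.floor_le (Real.logb_nonneg hq hx)
  have hupper : max r α / α < q ^ (n + 1) := by
    rw [← Real.rpow_natCast, ← Real.logb_lt_iff_lt_rpow hq (zero_lt_one.trans_le hx)]
    exact_mod_cast Nat.lt_floor_add_one _
  constructor
  · rwa [le_div_iff₀' hα] at hlower
  · calc r ≤ max r α := le_max_left r α
      _ ≤ α * q ^ (n + 1) := ((div_lt_iff₀' hα).1 hupper).le
      _ = q * (α * q ^ n) := by ring

theorem exists_measurePreserving_ofReal_abs_le {μ : Measure ℝ} [NullSingletonClass μ]
    (hμ : ∀ a, μ (Iio a) ≠ ∞) {f : ℝ → ℝ} (hf : Measurable f) {α : ℝ} (hα : 0 < α)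
    (hlim : Tendsto (rearr μ f) atTop (nhds (ENNReal.ofReal α))) {q : ℝ} (hq : 1 < q) :
    ∃ τ : ℝ → ℝ, MeasurePreserving τ μ (volI (μ univ)) ∧
      ∀ᵐ t ∂μ, ENNReal.ofReal |f t| ≤ ENNReal.ofReal q * rearr μ f (τ t) := by
  have hαq : α < α * q := lt_mul_of_one_lt_right hα hq
  obtain ⟨k, hk, hkr⟩ := exists_measurable_geometric_level hα hq
  let c (n : ℕ) : ℝ≥0∞ := ENNReal.ofReal (α * q ^ n)
  have hc : Monotone c := fun m n hmn ↦ by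
    have := pow_le_pow_right₀ hq.le hmn
    dsimp only [c]
    gcongr
  have hkf : μ {x | k |f x| ≠ 0} ≠ ∞ := by
    refine measure_ne_top_of_subset (fun x hx ↦ ?_) (measure_setOf_le_ne_top_of_tendsto_rearrE hlim
      ((ENNReal.ofReal_lt_ofReal_iff (hα.trans hαq)).2 hαq))
    have hle : α * q ≤ max |f x| α :=
      (mul_le_mul_of_nonneg_left (le_self_pow₀ hq.le hx) hα.le).trans (hkr |f x|).1
    exact ENNReal.ofReal_le_ofReal ((le_max_iff.1 hle).resolve_right hαq.not_ge)
  obtain ⟨τ, hτ, hcτ⟩ := exists_measurePreserving_le_rearrE_comp hμ (hk.comp hf.abs) hkf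
  have hle_rearr (t : ℝ) : rearrE μ (c ∘ fun x ↦ k |f x|) t ≤ rearr μ f t := by
    refine rearrE_le_rearrE_of_le_max (c := ENNReal.ofReal α) (fun x ↦ ?_)
      ((antitone_rearrE μ _).le_of_tendsto hlim t)
    rw [← ENNReal.ofReal_max]
    exact ENNReal.ofReal_le_ofReal (hkr |f x|).1
  refine ⟨τ, hτ, ?_⟩
  filter_upwards [hcτ c hc] with t ht
  calc ENNReal.ofReal |f t| ≤ ENNReal.ofReal (q * (α * q ^ k |f t|)) :=
        ENNReal.ofReal_le_ofReal (hkr |f t|).2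
    _ = ENNReal.ofReal q * c (k |f t|) := ENNReal.ofReal_mul (zero_le_one.trans hq.le)
    _ ≤ ENNReal.ofReal q * rearr μ f (τ t) := by
        gcongr
        exact ht.trans (hle_rearr (τ t))

theorem exists_measurable_ae_eq_surjOn {X Y : Type*} [MeasurableSpace X] [StandardBorelSpace X]
    [MeasurableSpace Y] [StandardBorelSpace Y] {μ : Measure X} {σ : X → Y} (hσ : Measurable σ)
    {N : Set X} (hN : MeasurableSet N) (hN₀ : μ N = 0) (hNc : ¬N.Countable)
    {t : Set Y} (ht : MeasurableSet t) (htc : ¬t.Countable) (hσt : ∀ᵐ x ∂μ, σ x ∈ t) :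
    ∃ τ : X → Y, Measurable τ ∧ (∀ x, τ x ∈ t) ∧ SurjOn τ N t ∧ τ =ᵐ[μ] σ := by
  classical
  have := hN.standardBorel
  have := ht.standardBorel
  let e : N ≃ᵐ t := PolishSpace.measurableEquivOfNotCountable hNc htc
  have : Nonempty t := not_isEmpty_iff.1 fun _ ↦ htc (to_countable t)
  obtain ⟨φ, hφ, hφe⟩ := (MeasurableEmbedding.subtype_coe hN).exists_measurable_extend
    e.measurable fun _ ↦ inferInstance
  let G := σ ⁻¹' t \ N
  refine ⟨G.piecewise σ fun x ↦ φ x,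
    Measurable.piecewise ((hσ ht).diff hN) hσ (measurable_subtype_coe.comp hφ),
    fun x ↦ ?_, fun y hy ↦ ?_, ?_⟩
  · by_cases hx : x ∈ G
    · rw [piecewise_eq_of_mem _ _ _ hx]
      exact hx.1
    · rw [piecewise_eq_of_notMem _ _ _ hx]
      exact (φ x).2
  · obtain ⟨x, hx⟩ := e.surjective ⟨y, hy⟩
    refine ⟨x, x.2, ?_⟩
    rw [piecewise_eq_of_notMem _ _ _ fun hxG ↦ hxG.2 x.2]
    exact congrArg Subtype.val ((congrFun hφe x).trans hx)
  · filter_upwards [hσt, measure_eq_zero_iff_ae_notMem.1 hN₀] with x hxt hxN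
    exact piecewise_eq_of_mem _ _ _ ⟨hxt, hxN⟩

lemma not_countable_inter_of_mem_residual {X : Type*} [TopologicalSpace X] [BaireSpace X]
    [T1Space X] [PerfectSpace X] {s U : Set X} (hs : s ∈ residual X) (hU : IsOpen U)
    (hU₀ : U.Nonempty) : ¬(s ∩ U).Countable := by
  intro hcount
  have hcompl : (s ∩ U)ᶜ ∈ residual X := by
    rw [← biUnion_of_singleton (s ∩ U), compl_iUnion₂]
    exact (countable_bInter_mem hcount).2 fun x _ ↦
      residual_of_dense_open isOpen_compl_singleton (dense_compl_singleton x)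
  obtain ⟨x, hxU, hxs, hx⟩ :=
    (dense_of_mem_residual (inter_mem hs hcompl)).inter_open_nonempty U hU hU₀
  exact hx ⟨hxs, hxU⟩

lemma exists_null_not_countable_subset {U : Set ℝ} (hU : IsOpen U) (hU₀ : U.Nonempty) :
    ∃ N ⊆ U, MeasurableSet N ∧ volume N = 0 ∧ ¬N.Countable :=
  ⟨{x | Liouville x} ∩ U, inter_subset_right,
    IsGδ.setOfPred_liouville.measurableSet.inter hU.measurableSet,
    measure_mono_null inter_subset_left volume_setOfPred_liouville,
    not_countable_inter_of_mem_residual eventually_residual_liouville hU hU₀⟩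

/-- If `f` is measurable on `I = (0,∞)` and its decreasing rearrangement `f*`
(w.r.t. Lebesgue measure on `(0,∞)`) tends to `α > 0` at `∞`, then for every `ε > 0` there is a
measurable, surjective, measure-preserving transformation `τ : (0,∞) → (0,∞)` with
`|f(t)| ≤ (1+ε) f*(τ(t))` for a.e. `t ∈ (0,∞)`. -/
theorem stmt_0 (f : ℝ → ℝ) (hf : Measurable f) (α : ℝ) (hα : 0 < α)
    (hlim : Tendsto (fun t => rearr (volume.restrict (Set.Ioi (0:ℝ))) f t) atTop
      (nhds (ENNReal.ofReal α)))
    (ε : ℝ) (hε : 0 < ε) :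
    ∃ τ : ℝ → ℝ, Measurable τ ∧
      Set.MapsTo τ (Set.Ioi (0:ℝ)) (Set.Ioi (0:ℝ)) ∧
      Set.SurjOn τ (Set.Ioi (0:ℝ)) (Set.Ioi (0:ℝ)) ∧
      MeasurePreserving τ (volume.restrict (Set.Ioi (0:ℝ))) (volume.restrict (Set.Ioi (0:ℝ))) ∧
      ∀ᵐ t ∂(volume.restrict (Set.Ioi (0:ℝ))),
        ENNReal.ofReal |f t| ≤
          ENNReal.ofReal (1 + ε) * rearr (volume.restrict (Set.Ioi (0:ℝ))) f (τ t) := by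
  have hfin (a : ℝ) : volume.restrict (Ioi (0 : ℝ)) (Iio a) ≠ ∞ := by
    rw [← volI_top, volI_Iio, min_top_right]
    exact ENNReal.ofReal_ne_top
  obtain ⟨σ, hσ, hfσ⟩ :=
    exists_measurePreserving_ofReal_abs_le hfin hf hα hlim (lt_add_of_pos_right 1 hε)
  rw [Measure.restrict_apply_univ, Real.volume_Ioi, volI_top] at hσ
  obtain ⟨N, hN, hNmeas, hN₀, hNc⟩ := exists_null_not_countable_subset isOpen_Ioi nonempty_Ioi
  obtain ⟨τ, hτ, hmaps, hsurj, hτσ⟩ := exists_measurable_ae_eq_surjOn hσ.measurable hNmeas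
    (Measure.restrict_le_self.absolutelyContinuous hN₀) hNc measurableSet_Ioi
    (fun h ↦ hNc (h.mono hN))
    (hσ.quasiMeasurePreserving.ae (ae_restrict_mem measurableSet_Ioi))
  refine ⟨τ, hτ, fun t _ ↦ hmaps t, hsurj.mono hN subset_rfl, hσ.congr hτ hτσ.symm, ?_⟩
  filter_upwards [hfσ, hτσ] with t ht hτt
  rwa [hτt]
end

section
/- For every non-negative measurable functions f, g on I=(0,a), 0<a≤∞, whose decreasing rearrangements f*, g* are finite everywhere on (0,a), it holds that ∫_I (f* − g*)₊ dm ≤ ∫_I (f − g)₊ dm, where h₊ = max{h,0} and the inequality is understood in [0,∞]. -/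
open MeasureTheory Set Filter
open scoped ENNReal

/-!
By Tonelli, `∫ (f - g)₊ dμ` is the integral over `s > 0` of the measure of `{g ≤ s < f}`, which is
at least `μ {f > s} - μ {g > s}`. Since `f* t ≤ s ↔ μ {f > s} ≤ t`, the set `{g* ≤ s < f*}` is an
interval of length exactly `(μ {f > s} - μ {g > s})₊`. Integrating over `s` gives the inequality.
-/

lemma measurableSet_Iset (a : ℝ≥0∞) : MeasurableSet (Iset a) :=
  measurableSet_Ioi.inter (measurableSet_lt ENNReal.measurable_ofReal measurable_const)

lemma Iset_mono : Monotone Iset :=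
  fun _ _ hab _ hx => ⟨hx.1, hx.2.trans_le hab⟩

lemma volume_Iset_sdiff_Iset (b c : ℝ≥0∞) : volume (Iset c \ Iset b) = c - b := by
  obtain hcb | hbc := le_or_gt c b
  · rw [sdiff_eq_empty.2 (Iset_mono hcb), measure_empty, tsub_eq_zero_of_le hcb]
  · rw [measure_sdiff (Iset_mono hbc.le) (measurableSet_Iset b).nullMeasurableSet
      (by rw [volume_Iset]; exact hbc.ne_top), volume_Iset, volume_Iset]

lemma volume_restrict_Ioi_ofReal_mem_Ico (b c : ℝ≥0∞) :
    volume.restrict (Ioi 0) {s : ℝ | ENNReal.ofReal s ∈ Ico b c} = c - b := by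
  have : {s : ℝ | ENNReal.ofReal s ∈ Ico b c} ∩ Ioi 0 = Iset c \ Iset b := by
    ext s
    simp only [Iset, mem_inter_iff, mem_ofPred_eq, mem_Ico, mem_Ioi, Set.mem_sdiff, not_and, not_lt]
    tauto
  rw [Measure.restrict_apply' measurableSet_Ioi, this, volume_Iset_sdiff_Iset]

lemma lintegral_tsub_eq_lintegral_meas_mem_Ico {α : Type*} [MeasurableSpace α] (μ : Measure α)
    [SFinite μ] {f g : α → ℝ≥0∞} (hf : Measurable f) (hg : Measurable g) :
    ∫⁻ x, (f x - g x) ∂μ = ∫⁻ s in Ioi (0 : ℝ), μ {x | ENNReal.ofReal s ∈ Ico (g x) (f x)} := by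
  have hE : MeasurableSet {p : α × ℝ | ENNReal.ofReal p.2 ∈ Ico (g p.1) (f p.1)} :=
    (measurableSet_le (hg.comp measurable_fst) measurable_snd.ennreal_ofReal).inter
      (measurableSet_lt measurable_snd.ennreal_ofReal (hf.comp measurable_fst))
  calc ∫⁻ x, (f x - g x) ∂μ
      = ∫⁻ x, volume.restrict (Ioi 0) {s : ℝ | ENNReal.ofReal s ∈ Ico (g x) (f x)} ∂μ := by
        simp only [volume_restrict_Ioi_ofReal_mem_Ico]
    _ = μ.prod (volume.restrict (Ioi 0)) {p | ENNReal.ofReal p.2 ∈ Ico (g p.1) (f p.1)} :=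
        (Measure.prod_apply hE).symm
    _ = ∫⁻ s in Ioi (0 : ℝ), μ {x | ENNReal.ofReal s ∈ Ico (g x) (f x)} :=
        Measure.prod_apply_symm hE

section Rearrangement

variable (μ : Measure ℝ) (f g : ℝ → ℝ≥0∞)

lemma rearrE_antitone : Antitone (rearrE μ f) :=
  fun _ _ hst => sInf_le_sInf fun _ hu => ⟨hu.1, hu.2.trans (ENNReal.ofReal_le_ofReal hst)⟩

lemma rearrE_le_iff {s : ℝ≥0∞} {t : ℝ} :
    rearrE μ f t ≤ s ↔ μ {x | s < f x} ≤ ENNReal.ofReal t := by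
  constructor
  · intro hs
    obtain rfl | hs_top := eq_or_ne s ∞
    · simp
    obtain ⟨u, hu_anti, hu_gt, hu_lim⟩ := exists_seq_strictAnti_tendsto' hs_top.lt_top
    have hUnion : {x | s < f x} = ⋃ n, {x | u n < f x} := by
      ext x
      simp only [mem_ofPred_eq, mem_iUnion]
      exact ⟨fun hx => (hu_lim.eventually_lt_const hx).exists,
        fun ⟨n, hn⟩ => (hu_gt n).1.trans hn⟩
    have hMono : Monotone fun n => {x | u n < f x} :=
      fun _ _ hmn _ hx => (hu_anti.antitone hmn).trans_lt hx
    rw [hUnion, hMono.measure_iUnion]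
    refine iSup_le fun n => ?_
    obtain ⟨v, ⟨-, hv⟩, hvu⟩ := sInf_lt_iff.1 (hs.trans_lt (hu_gt n).1)
    exact (measure_mono fun x hx => hvu.trans hx).trans hv
  · exact fun hs => le_of_forall_gt_imp_ge_of_dense fun u hu =>
      sInf_le ⟨hu.pos, (measure_mono fun x hx => hu.trans hx).trans hs⟩

lemma lt_rearrE_iff {s : ℝ≥0∞} {t : ℝ} :
    s < rearrE μ f t ↔ ENNReal.ofReal t < μ {x | s < f x} := by
  rw [← not_le, rearrE_le_iff, not_le]

lemma volume_restrict_Ioi_mem_Ico_rearrE (s : ℝ≥0∞) :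
    volume.restrict (Ioi 0) {t | s ∈ Ico (rearrE μ g t) (rearrE μ f t)}
      = μ {x | s < f x} - μ {x | s < g x} := by
  simp only [mem_Ico, rearrE_le_iff, lt_rearrE_iff]
  exact volume_restrict_Ioi_ofReal_mem_Ico _ _

variable {f g}

theorem lintegral_rearrE_tsub_le [SFinite μ] (hf : Measurable f) (hg : Measurable g) :
    ∫⁻ t in Ioi 0, (rearrE μ f t - rearrE μ g t) ≤ ∫⁻ x, (f x - g x) ∂μ :=
  calc ∫⁻ t in Ioi 0, (rearrE μ f t - rearrE μ g t)
      = ∫⁻ s in Ioi (0 : ℝ), (μ {x | ENNReal.ofReal s < f x} - μ {x | ENNReal.ofReal s < g x}) := by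
        simp only [lintegral_tsub_eq_lintegral_meas_mem_Ico _ (rearrE_antitone μ f).measurable
          (rearrE_antitone μ g).measurable, volume_restrict_Ioi_mem_Ico_rearrE]
    _ ≤ ∫⁻ s in Ioi (0 : ℝ), μ {x | ENNReal.ofReal s ∈ Ico (g x) (f x)} :=
        lintegral_mono fun s => le_measure_sdiff.trans <|
          measure_mono fun _ hx => ⟨not_lt.1 hx.2, hx.1⟩
    _ = ∫⁻ x, (f x - g x) ∂μ := (lintegral_tsub_eq_lintegral_meas_mem_Ico μ hf hg).symm

end Rearrangement

-- Where both rearrangements are infinite, the integrand on the left is `∞ - ∞ = 0`.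
theorem stmt_3_general (μ : Measure ℝ) [SFinite μ] {f g : ℝ → ℝ}
    (hf : Measurable f) (hg : Measurable g) (hf0 : ∀ᵐ x ∂μ, 0 ≤ f x) :
    ∫⁻ t in Ioi 0, (rearr μ f t - rearr μ g t) ≤ ∫⁻ x, ENNReal.ofReal (f x - g x) ∂μ := by
  refine (lintegral_rearrE_tsub_le μ hf.abs.ennreal_ofReal hg.abs.ennreal_ofReal).trans
    (lintegral_mono_ae ?_)
  filter_upwards [hf0] with x hx
  rw [abs_of_nonneg hx, ← ENNReal.ofReal_sub _ (abs_nonneg _)]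
  exact ENNReal.ofReal_le_ofReal (sub_le_sub_left (le_abs_self _) _)

/-- For non-negative measurable `f, g` on `I=(0,a)` with everywhere finite
decreasing rearrangements, `∫_I (f* − g*)₊ dm ≤ ∫_I (f − g)₊ dm` (in `[0,∞]`). -/
theorem stmt_3 (a : ℝ≥0∞) (ha : 0 < a) (f g : ℝ → ℝ)
    (hf : Measurable f) (hg : Measurable g)
    (hf0 : ∀ x ∈ Iset a, 0 ≤ f x) (hg0 : ∀ x ∈ Iset a, 0 ≤ g x)
    (hffin : ∀ t ∈ Iset a, rearr (volI a) f t ≠ ∞)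
    (hgfin : ∀ t ∈ Iset a, rearr (volI a) g t ≠ ∞) :
    ∫⁻ t in Iset a, (rearr (volI a) f t - rearr (volI a) g t)
      ≤ ∫⁻ x in Iset a, ENNReal.ofReal (f x - g x) :=
  (lintegral_mono_set fun _ ht => ht.1).trans <|
    stmt_3_general (volume.restrict _) hf hg (ae_restrict_of_forall_mem (measurableSet_Iset a) hf0)
end

section
/- Let w be a non-increasing positive function on I=(0,a), 0<a≤∞, let v:I→[0,∞) be measurable with decreasing rearrangement v* = w (a.e. on I), and let f be measurable on I with f* finite and integrable on (0,x) for every x∈I (i.e. f ∈ L₁+L∞(I)), and with supp f ⊆ supp v (f = 0 a.e. on {v = 0}). Then, with the convention that f/v = 0 off supp f, the function f*/w rearranged with respect to the measure w·dm is submajorized by f/v rearranged with respect to v·dm: for every x ∈ (0, ∫_I w dm), ∫₀ˣ (f*/w)^{*,w} dm ≤ ∫₀ˣ (f/v)^{*,v} dm. -/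
open MeasureTheory Set Filter
open scoped ENNReal

/-!
For `f* = f^{*,μ}` one has the formula `∫₀ˣ f* = min_{l} (l x + ∫ (f - l)⁺ dμ)`, attained at
`l = f*(x)`, so submajorization follows once `∫ (f*/w - l)⁺ w dm ≤ ∫ (|f|/v - l)⁺ v dm` for all
constants `l`. Moving the weights inside, this reads `∫ (f* - l v*)⁺ dm ≤ ∫ (|f| - l v)⁺ dm`. Since
`l v* = (l v)*`, it is an instance of `∫ (f* - h*)⁺ dm ≤ ∫ (f - h)⁺ dμ` for `f, h ≥ 0`, which holds
layer by layer: the set `{f > s} \ {h > s}` has measure at least `μ{f > s} - μ{h > s}`, and the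
positive part of this difference is the length of `{f* > s} \ {h* > s}`.

The truncated subtraction of `ℝ≥0∞` plays the role of the positive part.
-/

section Interval

lemma Iset_subset_Ioi (a : ℝ≥0∞) : Iset a ⊆ Ioi 0 := fun _ ht => ht.1

lemma Iset_mono_s5 {a b : ℝ≥0∞} (hab : a ≤ b) : Iset a ⊆ Iset b :=
  fun _ ht => ⟨ht.1, ht.2.trans_le hab⟩

lemma Iset_zero : Iset 0 = ∅ := by simp [Iset]

lemma measurableSet_setOf_mem_Iset {α : Type*} [MeasurableSpace α] {f : α → ℝ≥0∞}
    (hf : Measurable f) : MeasurableSet {p : α × ℝ | p.2 ∈ Iset (f p.1)} :=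
  (measurableSet_Ioi.preimage measurable_snd).inter
    (measurableSet_lt measurable_snd.ennreal_ofReal (hf.comp measurable_fst))

lemma volume_Iset_diff_Iset (a b : ℝ≥0∞) : volume (Iset a \ Iset b) = a - b := by
  rcases le_or_gt a b with hab | hba
  · rw [sdiff_eq_bot_iff.2 (Iset_mono_s5 hab), tsub_eq_zero_of_le hab]
    exact measure_empty
  · rw [measure_sdiff (Iset_mono_s5 hba.le) (measurableSet_Iset b).nullMeasurableSet
      (by rw [volume_Iset]; exact hba.ne_top), volume_Iset, volume_Iset]

instance instSFiniteVolI (a : ℝ≥0∞) : SFinite (volI a) :=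
  inferInstanceAs (SFinite (volume.restrict (Iset a)))

end Interval

section LayerCake

variable {α : Type*} [MeasurableSpace α] (μ : Measure α) [SFinite μ]

lemma lintegral_tsub_eq_lintegral_measure_layer {f h : α → ℝ≥0∞} (hf : Measurable f)
    (hh : Measurable h) :
    ∫⁻ x, (f x - h x) ∂μ = ∫⁻ s : ℝ, μ ({x | s ∈ Iset (f x)} \ {x | s ∈ Iset (h x)}) := by
  have hS := (measurableSet_setOf_mem_Iset hf).diff (measurableSet_setOf_mem_Iset hh)
  calc ∫⁻ x, (f x - h x) ∂μ = ∫⁻ x, volume (Iset (f x) \ Iset (h x)) ∂μ := by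
        simp only [volume_Iset_diff_Iset]
    _ = (μ.prod volume) _ := (Measure.prod_apply hS).symm
    _ = _ := Measure.prod_apply_symm hS

lemma lintegral_eq_lintegral_measure_layer {f : α → ℝ≥0∞} (hf : Measurable f) :
    ∫⁻ x, f x ∂μ = ∫⁻ s : ℝ, μ {x | s ∈ Iset (f x)} := by
  simpa [Iset_zero] using lintegral_tsub_eq_lintegral_measure_layer μ hf measurable_const (h := 0)

end LayerCake

/-- The decreasing rearrangement `f^{*,μ}` of an `ℝ≥0∞`-valued function on an arbitrary measure
space. For measures on `ℝ` it unfolds to `rearrE`; the argument `t` is meant to be non-negative. -/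
noncomputable def rearrangement {α : Type*} [MeasurableSpace α] (μ : Measure α) (f : α → ℝ≥0∞)
    (t : ℝ) : ℝ≥0∞ :=
  sInf {s : ℝ≥0∞ | 0 < s ∧ μ {x | s < f x} ≤ ENNReal.ofReal t}

section Rearrangement

variable {α : Type*} [MeasurableSpace α] (μ : Measure α)

lemma rearrangement_antitone (f : α → ℝ≥0∞) : Antitone (rearrangement μ f) := fun _ _ hst =>
  sInf_le_sInf fun _ hr => ⟨hr.1, hr.2.trans (ENNReal.ofReal_le_ofReal hst)⟩

lemma measurable_rearrangement (f : α → ℝ≥0∞) : Measurable (rearrangement μ f) :=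
  (rearrangement_antitone μ f).measurable

lemma exists_gt_lt_measure_setOf_lt {f : α → ℝ≥0∞} {c s : ℝ≥0∞} (hc : c < μ {x | s < f x}) :
    ∃ r > s, c < μ {x | r < f x} := by
  have hs : s < ∞ := by
    rw [lt_top_iff_ne_top]
    rintro rfl
    simp at hc
  obtain ⟨u, u_anti, u_mem, u_lim⟩ := exists_seq_strictAnti_tendsto' hs
  have superlevel_eq : {x | s < f x} = ⋃ n, {x | u n < f x} := by
    ext x
    simp only [mem_ofPred_eq, mem_iUnion]
    exact ⟨fun hx => (u_lim.eventually (gt_mem_nhds hx)).exists,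
      fun ⟨n, hn⟩ => (u_mem n).1.trans hn⟩
  have superlevel_mono : Monotone fun n => {x | u n < f x} :=
    fun _ _ hmn _ hx => (u_anti.antitone hmn).trans_lt hx
  rw [superlevel_eq, superlevel_mono.measure_iUnion] at hc
  obtain ⟨n, hn⟩ := lt_iSup_iff.1 hc
  exact ⟨u n, (u_mem n).1, hn⟩

lemma lt_rearrangement_iff {f : α → ℝ≥0∞} {s : ℝ≥0∞} {t : ℝ} :
    s < rearrangement μ f t ↔ ENNReal.ofReal t < μ {x | s < f x} := by
  constructor
  · contrapose!
    refine fun hs => le_of_forall_gt_imp_ge_of_dense fun r hr => sInf_le ⟨hr.bot_lt, ?_⟩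
    exact (measure_mono fun x (hx : r < f x) => hr.trans hx).trans hs
  · intro hs
    obtain ⟨r, hsr, hr⟩ := exists_gt_lt_measure_setOf_lt μ hs
    refine hsr.trans_le (le_sInf fun q ⟨_, hq⟩ => ?_)
    by_contra! hqr
    exact (hr.trans_le (measure_mono fun x (hx : r < f x) => hqr.trans hx)).not_ge hq

lemma setOf_mem_Iset_rearrangement (f : α → ℝ≥0∞) (s : ℝ) :
    {t | s ∈ Iset (rearrangement μ f t)} ∩ Ioi 0 = Iset (μ {x | s ∈ Iset (f x)}) := by
  ext t
  by_cases hs : 0 < s <;> simp [Iset, hs, lt_rearrangement_iff, and_comm]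

lemma rearrangement_comp_of_galoisConnection {φ ψ : ℝ≥0∞ → ℝ≥0∞} (gc : GaloisConnection φ ψ)
    (f : α → ℝ≥0∞) (t : ℝ) :
    rearrangement μ (fun x => φ (f x)) t = φ (rearrangement μ f t) :=
  eq_of_forall_lt_iff fun s => by simp only [lt_rearrangement_iff, gc.lt_iff_lt]

lemma rearrangement_tsub_const (f : α → ℝ≥0∞) (l : ℝ≥0∞) (t : ℝ) :
    rearrangement μ (fun x => f x - l) t = rearrangement μ f t - l :=
  rearrangement_comp_of_galoisConnection μ (fun _ _ => tsub_le_iff_right) f t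

lemma galoisConnection_ennreal_mul_left (l : ℝ≥0∞) :
    GaloisConnection (l * ·) fun s => sSup {y | l * y ≤ s} := by
  refine fun y s => ⟨fun h => le_sSup h, fun h => ?_⟩
  calc l * y ≤ l * sSup {y | l * y ≤ s} := by gcongr
    _ = ⨆ y ∈ {y | l * y ≤ s}, l * y := ENNReal.mul_sSup
    _ ≤ s := iSup₂_le fun _ hy => hy

lemma rearrangement_const_mul (l : ℝ≥0∞) (f : α → ℝ≥0∞) (t : ℝ) :
    rearrangement μ (fun x => l * f x) t = l * rearrangement μ f t :=
  rearrangement_comp_of_galoisConnection μ (galoisConnection_ennreal_mul_left l) f t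

variable [SFinite μ] {f h : α → ℝ≥0∞}

lemma lintegral_rearrangement (hf : Measurable f) :
    ∫⁻ t in Ioi 0, rearrangement μ f t = ∫⁻ x, f x ∂μ := by
  simp only [lintegral_eq_lintegral_measure_layer _ (measurable_rearrangement μ f),
    lintegral_eq_lintegral_measure_layer μ hf, Measure.restrict_apply' measurableSet_Ioi,
    setOf_mem_Iset_rearrangement, volume_Iset]

lemma lintegral_rearrangement_tsub_rearrangement_le (hf : Measurable f) (hh : Measurable h) :
    ∫⁻ t in Ioi 0, (rearrangement μ f t - rearrangement μ h t) ≤ ∫⁻ x, (f x - h x) ∂μ := by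
  rw [lintegral_tsub_eq_lintegral_measure_layer _ (measurable_rearrangement μ f)
    (measurable_rearrangement μ h), lintegral_tsub_eq_lintegral_measure_layer μ hf hh]
  refine lintegral_mono fun s => ?_
  rw [Measure.restrict_apply' measurableSet_Ioi, inter_sdiff_distrib_right,
    setOf_mem_Iset_rearrangement, setOf_mem_Iset_rearrangement, volume_Iset_diff_Iset]
  exact le_measure_sdiff

lemma lintegral_rearrangement_tsub_const (hf : Measurable f) (l : ℝ≥0∞) :
    ∫⁻ t in Ioi 0, (rearrangement μ f t - l) = ∫⁻ x, (f x - l) ∂μ := by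
  simp only [← rearrangement_tsub_const]
  exact lintegral_rearrangement μ (hf.sub_const l)

end Rearrangement

section Submajorization

variable {α β : Type*} [MeasurableSpace α] [MeasurableSpace β]
  (μ : Measure α) (ν : Measure β) [SFinite μ] [SFinite ν] {f : α → ℝ≥0∞} {g : β → ℝ≥0∞}

lemma setLIntegral_Ioo_const_add (l : ℝ≥0∞) (x : ℝ) (F : ℝ → ℝ≥0∞) :
    ∫⁻ t in Ioo 0 x, (l + F t) = l * ENNReal.ofReal x + ∫⁻ t in Ioo 0 x, F t := by
  rw [lintegral_add_left measurable_const]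
  simp

lemma setLIntegral_rearrangement_le_add_lintegral_tsub (hf : Measurable f) (l : ℝ≥0∞) (x : ℝ) :
    ∫⁻ t in Ioo 0 x, rearrangement μ f t ≤ l * ENNReal.ofReal x + ∫⁻ y, (f y - l) ∂μ := by
  calc ∫⁻ t in Ioo 0 x, rearrangement μ f t
      ≤ ∫⁻ t in Ioo 0 x, (l + (rearrangement μ f t - l)) := lintegral_mono fun _ => le_add_tsub
    _ = l * ENNReal.ofReal x + ∫⁻ t in Ioo 0 x, (rearrangement μ f t - l) :=
        setLIntegral_Ioo_const_add l x _
    _ ≤ l * ENNReal.ofReal x + ∫⁻ t in Ioi 0, (rearrangement μ f t - l) := by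
        gcongr
        exact Ioo_subset_Ioi_self
    _ = _ := by rw [lintegral_rearrangement_tsub_const μ hf]

lemma add_lintegral_tsub_rearrangement_le_setLIntegral (hf : Measurable f) (x : ℝ) :
    rearrangement μ f x * ENNReal.ofReal x + ∫⁻ y, (f y - rearrangement μ f x) ∂μ
      ≤ ∫⁻ t in Ioo 0 x, rearrangement μ f t := by
  set l := rearrangement μ f x
  have excess_supported : ∫⁻ t in Ioi 0, (rearrangement μ f t - l)
      ≤ ∫⁻ t in Ioo 0 x, (rearrangement μ f t - l) := by
    calc ∫⁻ t in Ioi 0, (rearrangement μ f t - l)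
        ≤ ∫⁻ t in Ioo 0 x ∪ Ici x, (rearrangement μ f t - l) :=
          lintegral_mono_set fun t ht => (lt_or_ge t x).imp (⟨ht, ·⟩) id
      _ ≤ (∫⁻ t in Ioo 0 x, (rearrangement μ f t - l))
          + ∫⁻ t in Ici x, (rearrangement μ f t - l) :=
          lintegral_union_le _ _ _
      _ = ∫⁻ t in Ioo 0 x, (rearrangement μ f t - l) := by
          rw [setLIntegral_congr_fun measurableSet_Ici fun t ht =>
            tsub_eq_zero_of_le (rearrangement_antitone μ f ht), lintegral_zero, add_zero]
  calc l * ENNReal.ofReal x + ∫⁻ y, (f y - l) ∂μ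
      ≤ l * ENNReal.ofReal x + ∫⁻ t in Ioo 0 x, (rearrangement μ f t - l) := by
        rw [← lintegral_rearrangement_tsub_const μ hf]
        gcongr
    _ = ∫⁻ t in Ioo 0 x, (l + (rearrangement μ f t - l)) :=
        (setLIntegral_Ioo_const_add l x _).symm
    _ = ∫⁻ t in Ioo 0 x, rearrangement μ f t :=
        setLIntegral_congr_fun measurableSet_Ioo fun t ht =>
          add_tsub_cancel_of_le (rearrangement_antitone μ f ht.2.le)

theorem setLIntegral_rearrangement_le_of_lintegral_tsub_le (hf : Measurable f) (hg : Measurable g)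
    (hfg : ∀ l : ℝ≥0∞, ∫⁻ y, (f y - l) ∂μ ≤ ∫⁻ y, (g y - l) ∂ν) (x : ℝ) :
    ∫⁻ t in Ioo 0 x, rearrangement μ f t ≤ ∫⁻ t in Ioo 0 x, rearrangement ν g t := by
  set l := rearrangement ν g x
  calc ∫⁻ t in Ioo 0 x, rearrangement μ f t
      ≤ l * ENNReal.ofReal x + ∫⁻ y, (f y - l) ∂μ :=
        setLIntegral_rearrangement_le_add_lintegral_tsub μ hf l x
    _ ≤ l * ENNReal.ofReal x + ∫⁻ y, (g y - l) ∂ν := by gcongr; exact hfg l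
    _ ≤ _ := add_lintegral_tsub_rearrangement_le_setLIntegral ν hg x

end Submajorization

section Weighted

variable {α : Type*} [MeasurableSpace α] (μ : Measure α)

lemma lintegral_div_tsub_withDensity_le {p w : α → ℝ≥0∞} (hp : Measurable p) (hw : Measurable w)
    (hw_top : ∀ᵐ t ∂μ, w t ≠ ∞) (l : ℝ≥0∞) :
    ∫⁻ t, (p t / w t - l) ∂(μ.withDensity w) ≤ ∫⁻ t, (p t - l * w t) ∂μ := by
  rw [lintegral_withDensity_eq_lintegral_mul μ hw ((hp.fun_div hw).sub_const l)]
  refine lintegral_mono_ae ?_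
  filter_upwards [hw_top] with t ht
  calc w t * (p t / w t - l) = w t * (p t / w t) - l * w t := by
        rw [ENNReal.mul_sub fun _ _ => ht, mul_comm l]
    _ ≤ p t - l * w t := by gcongr; exact ENNReal.mul_div_le

lemma lintegral_mul_tsub_le_withDensity {g v : α → ℝ≥0∞} (hg : Measurable g) (hv : Measurable v)
    (l : ℝ≥0∞) :
    ∫⁻ x, (g x * v x - l * v x) ∂μ ≤ ∫⁻ x, (g x - l) ∂(μ.withDensity v) := by
  rw [lintegral_withDensity_eq_lintegral_mul μ hv (hg.sub_const l)]
  refine lintegral_mono fun x => ?_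
  rw [Pi.mul_apply, mul_comm (v x)]
  exact le_tsub_mul

end Weighted

/-- Here `g` plays the role of `f / v`: writing `f = g v` a.e. encodes the condition
`supp f ⊆ supp v`. -/
theorem stmt_5_general {α : Type*} [MeasurableSpace α] (μ : Measure α) [SFinite μ]
    {f g v : α → ℝ≥0∞} (hf : Measurable f) (hg : Measurable g) (hv : Measurable v)
    (hfgv : ∀ᵐ y ∂μ, f y = g y * v y) {a : ℝ≥0∞} {w : ℝ → ℝ≥0∞} (hw : Measurable w)
    (hw_top : ∀ᵐ t ∂(volI a), w t ≠ ∞) (hv_star : ∀ᵐ t ∂(volI a), rearrangement μ v t = w t)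
    (x : ℝ) :
    ∫⁻ t in Ioo 0 x, rearrangement ((volI a).withDensity w) (fun s => rearrangement μ f s / w s) t
      ≤ ∫⁻ t in Ioo 0 x, rearrangement (μ.withDensity v) g t := by
  have hf_star := measurable_rearrangement μ f
  refine setLIntegral_rearrangement_le_of_lintegral_tsub_le _ _ (hf_star.div hw) hg (fun l => ?_) x
  calc ∫⁻ t, (rearrangement μ f t / w t - l) ∂((volI a).withDensity w)
      ≤ ∫⁻ t, (rearrangement μ f t - l * w t) ∂(volI a) :=
        lintegral_div_tsub_withDensity_le _ hf_star hw hw_top l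
    _ = ∫⁻ t, (rearrangement μ f t - rearrangement μ (fun y => l * v y) t) ∂(volI a) := by
        refine lintegral_congr_ae ?_
        filter_upwards [hv_star] with t ht
        rw [rearrangement_const_mul, ht]
    _ ≤ ∫⁻ t in Ioi 0, (rearrangement μ f t - rearrangement μ (fun y => l * v y) t) :=
        lintegral_mono_set (Iset_subset_Ioi a)
    _ ≤ ∫⁻ y, (f y - l * v y) ∂μ :=
        lintegral_rearrangement_tsub_rearrangement_le μ hf (hv.const_mul l)
    _ = ∫⁻ y, (g y * v y - l * v y) ∂μ := by
        refine lintegral_congr_ae ?_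
        filter_upwards [hfgv] with y hy
        rw [hy]
    _ ≤ ∫⁻ y, (g y - l) ∂(μ.withDensity v) := lintegral_mul_tsub_le_withDensity μ hg hv l

lemma wMeas_eq_withDensity_abs {I : Set ℝ} {v : ℝ → ℝ} (hI : MeasurableSet I)
    (hv_nonneg : ∀ x ∈ I, 0 ≤ v x) :
    wMeas I v = (volume.restrict I).withDensity fun y => ENNReal.ofReal |v y| := by
  refine withDensity_congr_ae ?_
  filter_upwards [ae_restrict_mem hI] with y hy
  rw [abs_of_nonneg (hv_nonneg y hy)]

lemma ofReal_abs_eq_ofReal_abs_div_mul {r q : ℝ} (h : q = 0 → r = 0) :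
    ENNReal.ofReal |r| = ENNReal.ofReal |r / q| * ENNReal.ofReal |q| := by
  rw [← ENNReal.ofReal_mul (abs_nonneg _), ← abs_mul, div_mul_cancel_of_imp h]

/-- Theorem H-L: Let `w` be a non-increasing positive weight on `I=(0,a)`,
`v ≥ 0` measurable with `v* = w` a.e., and `f ∈ L₁+L∞(I)` with `supp f ⊆ supp v`. Then
`(f*/w)^{*,w} ≺ (f/v)^{*,v}` on `(0, ∫_I w dm)` (with the convention `f/v = 0` off `supp f`). -/
theorem stmt_5 (a : ℝ≥0∞) (ha : 0 < a) (w v f : ℝ → ℝ)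
    (hw_pos : ∀ x ∈ Iset a, 0 < w x) (hw_anti : AntitoneOn w (Iset a)) (hw_meas : Measurable w)
    (hv_meas : Measurable v) (hv_nonneg : ∀ x ∈ Iset a, 0 ≤ v x)
    (hv_star : ∀ᵐ t ∂(volI a), rearr (volI a) v t = ENNReal.ofReal (w t))
    (hf_meas : Measurable f)
    (hf_fin : ∀ t ∈ Iset a, rearr (volI a) f t ≠ ∞)
    (hf_loc : ∀ x ∈ Iset a, ∫⁻ t in Set.Ioo 0 x, rearr (volI a) f t ≠ ∞)
    (hsupp : ∀ᵐ x ∂(volI a), v x = 0 → f x = 0) :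
    ∀ x : ℝ, 0 < x → ENNReal.ofReal x < bval a w →
      ∫⁻ t in Set.Ioo 0 x,
          rearrE (wMeas (Iset a) w) (fun s => rearr (volI a) f s / ENNReal.ofReal (w s)) t
        ≤ ∫⁻ t in Set.Ioo 0 x, rearr (wMeas (Iset a) v) (fun y => f y / v y) t := by
  intro x _ _
  rw [wMeas_eq_withDensity_abs (measurableSet_Iset a) hv_nonneg]
  exact stmt_5_general (volI a) hf_meas.abs.ennreal_ofReal (hf_meas.div hv_meas).abs.ennreal_ofReal
    hv_meas.abs.ennreal_ofReal (hsupp.mono fun _ => ofReal_abs_eq_ofReal_abs_div_mul)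
    hw_meas.ennreal_ofReal (ae_of_all _ fun _ => ENNReal.ofReal_ne_top) hv_star x
end
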